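/- For p1, p2 ∈ (0,1), let Y1 ~ Bern(p1) and Y2 ~ Bern(p2). Over all joint distributions with these margins, the maximal Pearson correlation ρ(Y1,Y2) equals 1 if and only if p1 = p2 (attained by the comonotone coupling), and the minimal Pearson correlation equals −1 if and only if p1 = 1 − p2 (attained by the countermonotone coupling). Consequently, if G1 and G2 are Bernoulli distribution functions, the transformed rank correlation κ_{G1,G2} attains both bounds ±1 (at the comonotone and countermonotone copulas, respectively) if and only if p1 = p2 = 1/2. -/

import Mathlib

open MeasureTheory ProbabilityTheory Set

noncomputable section

/-- The uniform distribution on (0,1). -/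
def unif01 : Measure ℝ := volume.restrict (Set.Ioo (0:ℝ) 1)

/-- Pearson's correlation coefficient of two real random variables. -/
def pearson {Ω : Type*} [MeasurableSpace Ω] (μ : Measure Ω) (Y1 Y2 : Ω → ℝ) : ℝ :=
  ((∫ ω, Y1 ω * Y2 ω ∂μ) - (∫ ω, Y1 ω ∂μ) * (∫ ω, Y2 ω ∂μ)) /
    Real.sqrt (variance Y1 μ * variance Y2 μ)

/-- The distribution function (CDF) of a measure on ℝ. -/
def cdfOf (ν : Measure ℝ) : ℝ → ℝ := fun x => (ν (Set.Iic x)).toReal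

/-- The quantile function (generalized inverse) of a distribution function. -/
def quantileFn (G : ℝ → ℝ) (p : ℝ) : ℝ := sInf {x : ℝ | p ≤ G x}

/-- The Bernoulli distribution `Bern(p)` on ℝ: value 1 with probability `p`,
value 0 with probability `1 − p`. -/
def bern (p : ℝ) : Measure ℝ :=
  ENNReal.ofReal p • Measure.dirac (1:ℝ) + ENNReal.ofReal (1 - p) • Measure.dirac (0:ℝ)

/-- `μ` is a coupling (joint distribution) with first margin `ν1` and second margin `ν2`. -/
def IsCoupling (μ : Measure (ℝ × ℝ)) (ν1 ν2 : Measure ℝ) : Prop :=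
  IsProbabilityMeasure μ ∧ μ.map Prod.fst = ν1 ∧ μ.map Prod.snd = ν2

/-- The comonotone coupling `(G1⁻¹(U), G2⁻¹(U))`, `U ~ U(0,1)`, of two margins. -/
def comonCoupling (ν1 ν2 : Measure ℝ) : Measure (ℝ × ℝ) :=
  unif01.map (fun u => (quantileFn (cdfOf ν1) u, quantileFn (cdfOf ν2) u))

/-- The countermonotone coupling `(G1⁻¹(U), G2⁻¹(1−U))`, `U ~ U(0,1)`, of two margins. -/
def counterCoupling (ν1 ν2 : Measure ℝ) : Measure (ℝ × ℝ) :=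
  unif01.map (fun u => (quantileFn (cdfOf ν1) u, quantileFn (cdfOf ν2) (1 - u)))

/-!
Let `H` be the joint distribution function of a coupling of `Bern(p1)` and `Bern(p2)`. On `{0, 1}²`
one has `xy = x + y - 1 + 𝟙{x ≤ 0, y ≤ 0}`, so the covariance is `H(0,0) - (1 - p1) (1 - p2)` and
the correlation is an increasing function of `H(0,0)`. The Fréchet–Hoeffding bounds
`max 0 (F + G - 1) ≤ H ≤ min F G` hold for arbitrary margins and are attained by the
countermonotone and the comonotone coupling. The extreme correlations are therefore
`min a b / √(a b)` with `a = (1 - p1) p2`, `b = p1 (1 - p2)`, and `-min a b / √(a b)` with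
`a = (1 - p1) (1 - p2)`, `b = p1 p2`; such a quotient is `1` exactly when `a = b`.
-/

section Quantile

theorem quantileFn_le_iff (G : StieltjesFunction ℝ) {u x : ℝ}
    (hlt : ∃ y, G y < u) (hle : ∃ y, u ≤ G y) : quantileFn G u ≤ x ↔ u ≤ G x := by
  obtain ⟨y, hy⟩ := hlt
  have hbdd : BddBelow {z | u ≤ G z} :=
    ⟨y, fun z hz ↦ (G.mono.reflect_lt (hy.trans_le hz)).le⟩
  refine ⟨fun hx ↦ ?_, fun hx ↦ csInf_le hbdd hx⟩
  have hright : ∀ r : Ioi x, u ≤ G r := fun r ↦ by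
    obtain ⟨s, hs, hsr⟩ := exists_lt_of_csInf_lt hle (hx.trans_lt r.2)
    exact le_trans hs (G.mono hsr.le)
  exact (le_ciInf hright).trans_eq (G.iInf_Ioi_eq x)

variable (ν : Measure ℝ) [IsProbabilityMeasure ν]

theorem cdfOf_eq_cdf : cdfOf ν = cdf ν :=
  funext fun x ↦ (cdf_eq_real ν x).symm

theorem cdfOf_mem_Icc (x : ℝ) : cdfOf ν x ∈ Icc (0 : ℝ) 1 :=
  cdfOf_eq_cdf ν ▸ ⟨cdf_nonneg ν x, cdf_le_one ν x⟩

theorem quantileFn_cdfOf_le_iff {u : ℝ} (hu : u ∈ Ioo (0 : ℝ) 1) (x : ℝ) :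
    quantileFn (cdfOf ν) u ≤ x ↔ u ≤ cdfOf ν x := by
  rw [cdfOf_eq_cdf]
  exact quantileFn_le_iff (cdf ν) ((tendsto_cdf_atBot ν).eventually_lt_const hu.1).exists
    ((tendsto_cdf_atTop ν).eventually_const_le hu.2).exists

theorem monotoneOn_quantileFn_cdfOf : MonotoneOn (quantileFn (cdfOf ν)) (Ioo 0 1) :=
  fun _ hu _ hv huv ↦ (quantileFn_cdfOf_le_iff ν hu _).2 <|
    huv.trans ((quantileFn_cdfOf_le_iff ν hv _).1 le_rfl)

end Quantile

section Uniform

instance isProbabilityMeasure_unif01 : IsProbabilityMeasure unif01 :=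
  ⟨by simp [unif01]⟩

theorem ae_unif01_mem_Ioo : ∀ᵐ u ∂unif01, u ∈ Ioo (0 : ℝ) 1 :=
  ae_restrict_mem measurableSet_Ioo

theorem unif01_eq_restrict_Icc : unif01 = volume.restrict (Icc 0 1) :=
  Measure.restrict_congr_set Ioo_ae_eq_Icc

theorem unif01_real_Icc {a b : ℝ} (ha : 0 ≤ a) (hb : b ≤ 1) :
    unif01.real (Icc a b) = max 0 (b - a) := by
  rw [unif01_eq_restrict_Icc, measureReal_restrict_apply measurableSet_Icc,
    inter_eq_left.2 (Icc_subset_Icc ha hb), Real.volume_real_Icc, max_comm]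

theorem unif01_real_Iic {t : ℝ} (ht : t ∈ Icc (0 : ℝ) 1) : unif01.real (Iic t) = t := by
  have hIcc : Iic t =ᵐ[unif01] Icc 0 t := by
    filter_upwards [ae_unif01_mem_Ioo] with u hu
    exact propext ⟨fun h ↦ ⟨hu.1.le, h⟩, fun h ↦ h.2⟩
  rw [measureReal_congr hIcc, unif01_real_Icc le_rfl ht.2, sub_zero, max_eq_right ht.1]

theorem hasLaw_one_sub_unif01 : HasLaw (fun u ↦ 1 - u) unif01 unif01 := by
  have hpre : (fun u : ℝ ↦ 1 - u) ⁻¹' Ioo 0 1 = Ioo 0 1 := by simp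
  have h := (volume.measurePreserving_sub_left (1 : ℝ)).restrict_preimage
    (measurableSet_Ioo (a := (0 : ℝ)) (b := 1))
  rw [hpre] at h
  exact h.hasLaw

theorem hasLaw_quantileFn_unif01 (ν : Measure ℝ) [IsProbabilityMeasure ν] :
    HasLaw (quantileFn (cdfOf ν)) ν unif01 := by
  have hmeas : AEMeasurable (quantileFn (cdfOf ν)) unif01 :=
    aemeasurable_restrict_of_monotoneOn measurableSet_Ioo (monotoneOn_quantileFn_cdfOf ν)
  have := Measure.isProbabilityMeasure_map hmeas
  refine ⟨hmeas, Measure.eq_of_cdf _ _ (StieltjesFunction.ext fun x ↦ ?_)⟩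
  have hIic : quantileFn (cdfOf ν) ⁻¹' Iic x =ᵐ[unif01] Iic (cdfOf ν x) := by
    filter_upwards [ae_unif01_mem_Ioo] with u hu
    exact propext (quantileFn_cdfOf_le_iff ν hu x)
  rw [cdf_eq_real, map_measureReal_apply_of_aemeasurable hmeas measurableSet_Iic,
    measureReal_congr hIic, unif01_real_Iic (cdfOf_mem_Icc ν x), cdfOf_eq_cdf]

end Uniform

section Coupling

variable {μ : Measure (ℝ × ℝ)} {ν1 ν2 : Measure ℝ}

theorem IsCoupling.hasLaw_fst (hμ : IsCoupling μ ν1 ν2) : HasLaw Prod.fst ν1 μ :=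
  ⟨by fun_prop, hμ.2.1⟩

theorem IsCoupling.hasLaw_snd (hμ : IsCoupling μ ν1 ν2) : HasLaw Prod.snd ν2 μ :=
  ⟨by fun_prop, hμ.2.2⟩

theorem IsCoupling.real_fst_preimage_Iic (hμ : IsCoupling μ ν1 ν2) (x : ℝ) :
    μ.real (Prod.fst ⁻¹' Iic x) = cdfOf ν1 x :=
  hμ.hasLaw_fst.measureReal_eq measurableSet_Iic

theorem IsCoupling.real_snd_preimage_Iic (hμ : IsCoupling μ ν1 ν2) (y : ℝ) :
    μ.real (Prod.snd ⁻¹' Iic y) = cdfOf ν2 y :=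
  hμ.hasLaw_snd.measureReal_eq measurableSet_Iic

theorem isCoupling_map_prodMk {Ω : Type*} [MeasurableSpace Ω] {P : Measure Ω}
    [IsProbabilityMeasure P] {X Y : Ω → ℝ} (hX : HasLaw X ν1 P) (hY : HasLaw Y ν2 P) :
    IsCoupling (P.map fun ω ↦ (X ω, Y ω)) ν1 ν2 :=
  ⟨Measure.isProbabilityMeasure_map (hX.aemeasurable.prodMk hY.aemeasurable),
    (Measure.fst_map_prodMk₀ hY.aemeasurable).trans hX.map_eq,
    (Measure.snd_map_prodMk₀ hX.aemeasurable).trans hY.map_eq⟩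

theorem IsCoupling.real_Iic_prod_Iic_le (hμ : IsCoupling μ ν1 ν2) (x y : ℝ) :
    μ.real (Iic x ×ˢ Iic y) ≤ min (cdfOf ν1 x) (cdfOf ν2 y) := by
  have := hμ.1
  rw [← hμ.real_fst_preimage_Iic, ← hμ.real_snd_preimage_Iic]
  exact le_min (measureReal_mono inter_subset_left) (measureReal_mono inter_subset_right)

theorem IsCoupling.le_real_Iic_prod_Iic (hμ : IsCoupling μ ν1 ν2) (x y : ℝ) :
    max 0 (cdfOf ν1 x + cdfOf ν2 y - 1) ≤ μ.real (Iic x ×ˢ Iic y) := by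
  have := hμ.1
  have hadd := measureReal_union_add_inter (μ := μ) (s := Prod.fst ⁻¹' Iic x)
    (measurable_snd measurableSet_Iic : MeasurableSet (Prod.snd ⁻¹' Iic y))
  have hle : μ.real (Prod.fst ⁻¹' Iic x ∪ Prod.snd ⁻¹' Iic y) ≤ 1 := measureReal_le_one
  rw [← hμ.real_fst_preimage_Iic, ← hμ.real_snd_preimage_Iic, prod_eq]
  exact max_le measureReal_nonneg (by linarith)

variable (ν1 ν2) [IsProbabilityMeasure ν1] [IsProbabilityMeasure ν2]

theorem isCoupling_comonCoupling : IsCoupling (comonCoupling ν1 ν2) ν1 ν2 :=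
  isCoupling_map_prodMk (hasLaw_quantileFn_unif01 ν1) (hasLaw_quantileFn_unif01 ν2)

theorem isCoupling_counterCoupling : IsCoupling (counterCoupling ν1 ν2) ν1 ν2 :=
  isCoupling_map_prodMk (hasLaw_quantileFn_unif01 ν1)
    ((hasLaw_quantileFn_unif01 ν2).fun_comp hasLaw_one_sub_unif01)

theorem comonCoupling_real_Iic_prod_Iic (x y : ℝ) :
    (comonCoupling ν1 ν2).real (Iic x ×ˢ Iic y) = min (cdfOf ν1 x) (cdfOf ν2 y) := by
  have hpre : (fun u ↦ (quantileFn (cdfOf ν1) u, quantileFn (cdfOf ν2) u)) ⁻¹' (Iic x ×ˢ Iic y)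
      =ᵐ[unif01] Iic (min (cdfOf ν1 x) (cdfOf ν2 y)) := by
    filter_upwards [ae_unif01_mem_Ioo] with u hu
    exact propext <| (and_congr (quantileFn_cdfOf_le_iff ν1 hu x)
      (quantileFn_cdfOf_le_iff ν2 hu y)).trans le_min_iff.symm
  have hF := cdfOf_mem_Icc ν1 x
  have hG := cdfOf_mem_Icc ν2 y
  rw [comonCoupling, map_measureReal_apply_of_aemeasurable
      ((hasLaw_quantileFn_unif01 ν1).aemeasurable.prodMk (hasLaw_quantileFn_unif01 ν2).aemeasurable)
      (measurableSet_Iic.prod measurableSet_Iic), measureReal_congr hpre,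
    unif01_real_Iic ⟨le_min hF.1 hG.1, min_le_of_left_le hF.2⟩]

theorem counterCoupling_real_Iic_prod_Iic (x y : ℝ) :
    (counterCoupling ν1 ν2).real (Iic x ×ˢ Iic y) = max 0 (cdfOf ν1 x + cdfOf ν2 y - 1) := by
  have hpre : (fun u ↦ (quantileFn (cdfOf ν1) u, quantileFn (cdfOf ν2) (1 - u))) ⁻¹'
      (Iic x ×ˢ Iic y) =ᵐ[unif01] Icc (1 - cdfOf ν2 y) (cdfOf ν1 x) := by
    filter_upwards [ae_unif01_mem_Ioo] with u hu
    have hu' : 1 - u ∈ Ioo (0 : ℝ) 1 := ⟨sub_pos.2 hu.2, sub_lt_self 1 hu.1⟩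
    exact propext <| (and_congr (quantileFn_cdfOf_le_iff ν1 hu x)
      ((quantileFn_cdfOf_le_iff ν2 hu' y).trans sub_le_comm)).trans and_comm
  rw [counterCoupling, map_measureReal_apply_of_aemeasurable
      ((hasLaw_quantileFn_unif01 ν1).aemeasurable.prodMk
        ((hasLaw_quantileFn_unif01 ν2).fun_comp hasLaw_one_sub_unif01).aemeasurable)
      (measurableSet_Iic.prod measurableSet_Iic), measureReal_congr hpre,
    unif01_real_Icc (sub_nonneg.2 (cdfOf_mem_Icc ν2 y).2) (cdfOf_mem_Icc ν1 x).2,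
    sub_sub_eq_add_sub]

end Coupling

section Bernoulli

theorem ae_bern_eq_zero_or_one (p : ℝ) : ∀ᵐ x ∂bern p, x = 0 ∨ x = 1 := by
  simp [bern, ae_add_measure_iff, Measure.ae_smul_measure]

variable {p p1 p2 : ℝ}

theorem bern_eq_bernoulliMeasure (hp : p ∈ Icc (0 : ℝ) 1) :
    bern p = bernoulliMeasure (1 : ℝ) 0 ⟨p, hp⟩ := by
  rw [bern, ENNReal.ofReal_eq_coe_nnreal hp.1, ENNReal.ofReal_eq_coe_nnreal (sub_nonneg.2 hp.2)]
  rfl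

theorem isProbabilityMeasure_bern (hp : p ∈ Icc (0 : ℝ) 1) : IsProbabilityMeasure (bern p) :=
  bern_eq_bernoulliMeasure hp ▸ inferInstance

theorem cdfOf_bern_zero (hp : p ∈ Icc (0 : ℝ) 1) : cdfOf (bern p) 0 = 1 - p := by
  rw [bern_eq_bernoulliMeasure hp]
  exact bernoulliMeasure_real_apply_of_notMem_of_mem _ measurableSet_Iic (by simp) (by simp)

theorem integrable_id_bern (hp : p ∈ Icc (0 : ℝ) 1) : Integrable (fun x ↦ x) (bern p) :=
  bern_eq_bernoulliMeasure hp ▸ integrable_bernoulliMeasure _ _ _ _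

theorem integral_id_bern (hp : p ∈ Icc (0 : ℝ) 1) : ∫ x, x ∂bern p = p := by
  rw [bern_eq_bernoulliMeasure hp, integral_bernoulliMeasure]
  simp

theorem variance_id_bern (hp : p ∈ Icc (0 : ℝ) 1) : Var[id; bern p] = (1 - p) * p := by
  have := isProbabilityMeasure_bern hp
  rw [variance_of_ae_eq_zero_or_one aemeasurable_id (ae_bern_eq_zero_or_one p),
    bern_eq_bernoulliMeasure hp]
  congr 1
  · exact bernoulliMeasure_real_apply_of_notMem_of_mem _ (measurableSet_singleton 0)
      (by simp) (by simp)
  · exact bernoulliMeasure_real_apply_of_mem_of_notMem _ (measurableSet_singleton 1)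
      (by simp) (by simp)

variable {μ : Measure (ℝ × ℝ)}

theorem IsCoupling.integral_mul_bern (hp1 : p1 ∈ Icc (0 : ℝ) 1) (hp2 : p2 ∈ Icc (0 : ℝ) 1)
    (hμ : IsCoupling μ (bern p1) (bern p2)) :
    ∫ ω, ω.1 * ω.2 ∂μ = p1 + p2 - 1 + μ.real (Iic 0 ×ˢ Iic 0) := by
  have := hμ.1
  have hmeas : Measurable fun x : ℝ ↦ x = 0 ∨ x = 1 := by fun_prop
  have hQ : MeasurableSet (Iic (0 : ℝ) ×ˢ Iic (0 : ℝ)) := measurableSet_Iic.prod measurableSet_Iic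
  have hfst : Integrable (fun ω : ℝ × ℝ ↦ ω.1) μ :=
    (hμ.hasLaw_fst.measurePreserving measurable_fst).integrable_comp_of_integrable
      (integrable_id_bern hp1)
  have hsnd : Integrable (fun ω : ℝ × ℝ ↦ ω.2) μ :=
    (hμ.hasLaw_snd.measurePreserving measurable_snd).integrable_comp_of_integrable
      (integrable_id_bern hp2)
  have hmul : (fun ω ↦ ω.1 * ω.2) =ᵐ[μ]
      fun ω ↦ ω.1 + ω.2 - 1 + (Iic 0 ×ˢ Iic 0).indicator 1 ω := by
    filter_upwards [(hμ.hasLaw_fst.ae_iff hmeas).2 (ae_bern_eq_zero_or_one p1),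
      (hμ.hasLaw_snd.ae_iff hmeas).2 (ae_bern_eq_zero_or_one p2)] with ω hx hy
    rcases hx with hx | hx <;> rcases hy with hy | hy <;> simp [indicator, Prod.le_def, hx, hy]
  rw [integral_congr_ae hmul, integral_add (by fun_prop) ((integrable_const 1).indicator hQ),
    integral_sub (by fun_prop) (by fun_prop), integral_add hfst hsnd, integral_indicator_one hQ,
    hμ.hasLaw_fst.integral_eq, hμ.hasLaw_snd.integral_eq, integral_id_bern hp1,
    integral_id_bern hp2]
  simp

theorem IsCoupling.pearson_bern (hp1 : p1 ∈ Icc (0 : ℝ) 1) (hp2 : p2 ∈ Icc (0 : ℝ) 1)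
    (hμ : IsCoupling μ (bern p1) (bern p2)) :
    pearson μ Prod.fst Prod.snd = (μ.real (Iic 0 ×ˢ Iic 0) - (1 - p1) * (1 - p2)) /
      √((1 - p1) * p1 * ((1 - p2) * p2)) := by
  rw [pearson, hμ.integral_mul_bern hp1 hp2, hμ.hasLaw_fst.integral_eq, hμ.hasLaw_snd.integral_eq,
    hμ.hasLaw_fst.variance_eq, hμ.hasLaw_snd.variance_eq, integral_id_bern hp1,
    integral_id_bern hp2, variance_id_bern hp1, variance_id_bern hp2]
  ring

theorem IsCoupling.pearson_bern_le_of_real_le {μ' : Measure (ℝ × ℝ)}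
    (hp1 : p1 ∈ Icc (0 : ℝ) 1) (hp2 : p2 ∈ Icc (0 : ℝ) 1)
    (hμ : IsCoupling μ (bern p1) (bern p2)) (hμ' : IsCoupling μ' (bern p1) (bern p2))
    (hle : μ.real (Iic 0 ×ˢ Iic 0) ≤ μ'.real (Iic 0 ×ˢ Iic 0)) :
    pearson μ Prod.fst Prod.snd ≤ pearson μ' Prod.fst Prod.snd := by
  rw [hμ.pearson_bern hp1 hp2, hμ'.pearson_bern hp1 hp2]
  gcongr

theorem IsCoupling.pearson_bern_le_pearson_comonCoupling (hp1 : p1 ∈ Icc (0 : ℝ) 1)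
    (hp2 : p2 ∈ Icc (0 : ℝ) 1) (hμ : IsCoupling μ (bern p1) (bern p2)) :
    pearson μ Prod.fst Prod.snd ≤
      pearson (comonCoupling (bern p1) (bern p2)) Prod.fst Prod.snd := by
  have := isProbabilityMeasure_bern hp1
  have := isProbabilityMeasure_bern hp2
  refine hμ.pearson_bern_le_of_real_le hp1 hp2 (isCoupling_comonCoupling _ _) ?_
  exact (hμ.real_Iic_prod_Iic_le 0 0).trans_eq (comonCoupling_real_Iic_prod_Iic _ _ 0 0).symm

theorem IsCoupling.pearson_counterCoupling_le_pearson_bern (hp1 : p1 ∈ Icc (0 : ℝ) 1)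
    (hp2 : p2 ∈ Icc (0 : ℝ) 1) (hμ : IsCoupling μ (bern p1) (bern p2)) :
    pearson (counterCoupling (bern p1) (bern p2)) Prod.fst Prod.snd ≤
      pearson μ Prod.fst Prod.snd := by
  have := isProbabilityMeasure_bern hp1
  have := isProbabilityMeasure_bern hp2
  refine (isCoupling_counterCoupling _ _).pearson_bern_le_of_real_le hp1 hp2 hμ ?_
  exact (counterCoupling_real_Iic_prod_Iic _ _ 0 0).trans_le (hμ.le_real_Iic_prod_Iic 0 0)

theorem pearson_comonCoupling_bern (hp1 : p1 ∈ Icc (0 : ℝ) 1) (hp2 : p2 ∈ Icc (0 : ℝ) 1) :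
    pearson (comonCoupling (bern p1) (bern p2)) Prod.fst Prod.snd =
      min ((1 - p1) * p2) (p1 * (1 - p2)) / √((1 - p1) * p2 * (p1 * (1 - p2))) := by
  have := isProbabilityMeasure_bern hp1
  have := isProbabilityMeasure_bern hp2
  rw [(isCoupling_comonCoupling _ _).pearson_bern hp1 hp2, comonCoupling_real_Iic_prod_Iic,
    cdfOf_bern_zero hp1, cdfOf_bern_zero hp2, ← min_sub_sub_right]
  ring_nf

theorem pearson_counterCoupling_bern (hp1 : p1 ∈ Icc (0 : ℝ) 1) (hp2 : p2 ∈ Icc (0 : ℝ) 1) :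
    pearson (counterCoupling (bern p1) (bern p2)) Prod.fst Prod.snd =
      -(min ((1 - p1) * (1 - p2)) (p1 * p2) / √((1 - p1) * (1 - p2) * (p1 * p2))) := by
  have := isProbabilityMeasure_bern hp1
  have := isProbabilityMeasure_bern hp2
  rw [(isCoupling_counterCoupling _ _).pearson_bern hp1 hp2, counterCoupling_real_Iic_prod_Iic,
    cdfOf_bern_zero hp1, cdfOf_bern_zero hp2, ← max_sub_sub_right, ← neg_div, ← max_neg_neg]
  ring_nf

end Bernoulli

theorem min_div_sqrt_mul_eq_one_iff {a b : ℝ} (ha : 0 < a) (hb : 0 < b) :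
    min a b / √(a * b) = 1 ↔ a = b := by
  have hmin : 0 < min a b := lt_min ha hb
  rw [div_eq_one_iff_eq (by positivity), eq_comm, Real.sqrt_eq_iff_mul_self_eq_of_pos hmin,
    ← min_mul_max a b, mul_right_inj' hmin.ne', inf_eq_sup]

theorem pearson_comonCoupling_bern_eq_one_iff {p1 p2 : ℝ} (hp1 : p1 ∈ Ioo (0 : ℝ) 1)
    (hp2 : p2 ∈ Ioo (0 : ℝ) 1) :
    pearson (comonCoupling (bern p1) (bern p2)) Prod.fst Prod.snd = 1 ↔ p1 = p2 := by
  have hq1 : 0 < 1 - p1 := sub_pos.2 hp1.2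
  have hq2 : 0 < 1 - p2 := sub_pos.2 hp2.2
  rw [pearson_comonCoupling_bern (Ioo_subset_Icc_self hp1) (Ioo_subset_Icc_self hp2),
    min_div_sqrt_mul_eq_one_iff (mul_pos hq1 hp2.1) (mul_pos hp1.1 hq2)]
  constructor <;> intro h <;> linarith

theorem pearson_counterCoupling_bern_eq_neg_one_iff {p1 p2 : ℝ} (hp1 : p1 ∈ Ioo (0 : ℝ) 1)
    (hp2 : p2 ∈ Ioo (0 : ℝ) 1) :
    pearson (counterCoupling (bern p1) (bern p2)) Prod.fst Prod.snd = -1 ↔ p1 = 1 - p2 := by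
  have hq1 : 0 < 1 - p1 := sub_pos.2 hp1.2
  have hq2 : 0 < 1 - p2 := sub_pos.2 hp2.2
  rw [pearson_counterCoupling_bern (Ioo_subset_Icc_self hp1) (Ioo_subset_Icc_self hp2), neg_inj,
    min_div_sqrt_mul_eq_one_iff (mul_pos hq1 hq2) (mul_pos hp1.1 hp2.1)]
  constructor <;> intro h <;> linarith

/-- for Bernoulli margins `Bern(p1)`, `Bern(p2)`, the comonotone
(countermonotone) coupling maximizes (minimizes) the Pearson correlation over all
couplings; the maximum equals 1 iff `p1 = p2`, the minimum equals −1 iff `p1 = 1 − p2`;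
consequently both bounds `±1` are attained iff `p1 = p2 = 1/2`. -/
theorem bernoulli_correlation_bounds
    (p1 p2 : ℝ) (hp1 : p1 ∈ Set.Ioo (0:ℝ) 1) (hp2 : p2 ∈ Set.Ioo (0:ℝ) 1) :
    (∀ μ : Measure (ℝ × ℝ), IsCoupling μ (bern p1) (bern p2) →
        pearson μ Prod.fst Prod.snd
          ≤ pearson (comonCoupling (bern p1) (bern p2)) Prod.fst Prod.snd) ∧
    (∀ μ : Measure (ℝ × ℝ), IsCoupling μ (bern p1) (bern p2) →
        pearson (counterCoupling (bern p1) (bern p2)) Prod.fst Prod.snd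
          ≤ pearson μ Prod.fst Prod.snd) ∧
    (pearson (comonCoupling (bern p1) (bern p2)) Prod.fst Prod.snd = 1 ↔ p1 = p2) ∧
    (pearson (counterCoupling (bern p1) (bern p2)) Prod.fst Prod.snd = -1 ↔ p1 = 1 - p2) ∧
    ((pearson (comonCoupling (bern p1) (bern p2)) Prod.fst Prod.snd = 1 ∧
        pearson (counterCoupling (bern p1) (bern p2)) Prod.fst Prod.snd = -1)
      ↔ (p1 = 1/2 ∧ p2 = 1/2)) := by
  have hI1 := Ioo_subset_Icc_self hp1
  have hI2 := Ioo_subset_Icc_self hp2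
  have hmax := pearson_comonCoupling_bern_eq_one_iff hp1 hp2
  have hmin := pearson_counterCoupling_bern_eq_neg_one_iff hp1 hp2
  refine ⟨fun _ hμ ↦ hμ.pearson_bern_le_pearson_comonCoupling hI1 hI2,
    fun _ hμ ↦ hμ.pearson_counterCoupling_le_pearson_bern hI1 hI2, hmax, hmin, ?_⟩
  rw [hmax, hmin]
  constructor <;> rintro ⟨h, h'⟩ <;> constructor <;> linarith
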